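/- Let 0 < p ≤ 1. The map G̃(A, B) = (p+1) ∫₀¹ (λA + (1-λ)B)^p dλ is jointly concave on pairs of n×n positive definite complex matrices (in the Loewner order), and for positive real scalars s ≠ t (i.e., 1×1 matrices) it satisfies G̃(s, t) = (t^{p+1} − s^{p+1})/(t − s), while G̃(t, t) = (p+1)t^p. Thus the function G(s,t) = (t^{p+1}−s^{p+1})/(t−s) for s ≠ t, G(t,t) = (p+1)t^p, extends to a jointly concave map on pairs of positive definite matrices. -/

import Mathlib

open Matrix MeasureTheory
open scoped ComplexOrder

attribute [local instance] Matrix.normedAddCommGroup Matrix.normedSpace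

/-- Matrix power by a real exponent via the functional calculus
(unitary diagonalization for Hermitian matrices; junk value otherwise). -/
noncomputable def mpow {n : ℕ} (A : Matrix (Fin n) (Fin n) ℂ) (q : ℝ) :
    Matrix (Fin n) (Fin n) ℂ :=
  if hA : A.IsHermitian then
    (hA.eigenvectorUnitary : Matrix (Fin n) (Fin n) ℂ) *
      Matrix.diagonal (fun i => ((hA.eigenvalues i ^ q : ℝ) : ℂ)) *
      (star (hA.eigenvectorUnitary : Matrix (Fin n) (Fin n) ℂ))
  else 0

/-- `G̃(A,B) = (p+1) ∫₀¹ (λA + (1-λ)B)^p dλ`. -/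
noncomputable def Gmap {n : ℕ} (p : ℝ) (A B : Matrix (Fin n) (Fin n) ℂ) :
    Matrix (Fin n) (Fin n) ℂ :=
  (p + 1) • ∫ l in Set.Icc (0 : ℝ) 1, mpow (l • A + (1 - l) • B) p

/-!
By the Löwner–Heinz theorem, `A ↦ A ^ p` is operator concave on the positive semidefinite cone, and
it is continuous there. For fixed `λ` the matrix `λA + (1-λ)B` depends linearly on `(A, B)`, so the
integrand of `Gmap` is jointly concave, and integration preserves this because the cone is closed.
On scalar matrices, the integral is that of `x ↦ x ^ p` along the segment from `t` to `s`.
-/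

section IntegralOverSegment

variable {E F : Type*} [AddCommGroup E] [Module ℝ E] [TopologicalSpace E] [ContinuousAdd E]
  [ContinuousSMul ℝ E] {s : Set E} {f : E → F}

lemma integrableOn_comp_segment [NormedAddCommGroup F] (hs : Convex ℝ s)
    (hf : ContinuousOn f s) {x y : E} (hx : x ∈ s) (hy : y ∈ s) :
    IntegrableOn (fun l : ℝ => f (l • x + (1 - l) • y)) (Set.Icc 0 1) := by
  refine ContinuousOn.integrableOn_compact isCompact_Icc (hf.comp (by fun_prop) ?_)
  exact fun l hl => hs hx hy hl.1 (sub_nonneg.2 hl.2) (add_sub_cancel l 1)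

lemma concaveOn_integral_segment [NormedAddCommGroup F] [NormedSpace ℝ F] [PartialOrder F]
    [IsOrderedAddMonoid F] [IsOrderedModule ℝ F] [hF : ClosedIciTopology F]
    (hf : ConcaveOn ℝ s f) (hfc : ContinuousOn f s) :
    ConcaveOn ℝ (s ×ˢ s)
      (fun x : E × E => ∫ l in Set.Icc (0 : ℝ) 1, f (l • x.1 + (1 - l) • x.2)) := by
  have hss : Convex ℝ (s ×ˢ s) := hf.1.prod hf.1
  refine integral_concaveOn_of_integrand_ae hss ?_
    fun x hx => integrableOn_comp_segment hf.1 hfc hx.1 hx.2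
  filter_upwards [ae_restrict_mem measurableSet_Icc] with l hl
  let L : E × E →ₗ[ℝ] E := l • LinearMap.fst ℝ E E + (1 - l) • LinearMap.snd ℝ E E
  have hL : s ×ˢ s ⊆ L ⁻¹' s := fun x hx =>
    hf.1 hx.1 hx.2 hl.1 (sub_nonneg.2 hl.2) (add_sub_cancel l 1)
  exact (hf.comp_linearMap L).subset hL hss

end IntegralOverSegment

lemma integral_rpow_segment {p s t : ℝ} (hp : -1 < p) (hst : s ≠ t) :
    ∫ l in (0 : ℝ)..1, ((s - t) * l + t) ^ p =
      (t ^ (p + 1) - s ^ (p + 1)) / ((p + 1) * (t - s)) := by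
  have hp₁ : p + 1 ≠ 0 := by linarith
  have hst₁ : s - t ≠ 0 := sub_ne_zero.2 hst
  have hts : t - s ≠ 0 := sub_ne_zero.2 hst.symm
  rw [intervalIntegral.integral_comp_mul_add (· ^ p) hst₁, integral_rpow (.inl hp)]
  simp only [mul_zero, zero_add, mul_one, sub_add_cancel, smul_eq_mul]
  field_simp
  ring

lemma continuousOn_rpow_Ici {A : Type*} [CStarAlgebra A] [PartialOrder A] [StarOrderedRing A]
    {p : ℝ} (hp : 0 ≤ p) : ContinuousOn (fun a : A => a ^ p) (Set.Ici 0) := by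
  lift p to NNReal using hp
  rcases eq_zero_or_pos p with rfl | hp
  · exact continuousOn_const.congr fun a ha => CFC.rpow_zero a ha
  · simp_rw [← CFC.nnrpow_eq_rpow hp]
    exact CFC.continuousOn_nnrpow p

section MatrixPower

open scoped MatrixOrder

variable {n : ℕ} {p : ℝ}

lemma closedIciTopology_matrix {ι : Type*} [Finite ι] : ClosedIciTopology (Matrix ι ι ℂ) := by
  classical
  have := Fintype.ofFinite ι
  -- The topology of the operator norm is definitionally the entrywise one.
  open scoped Matrix.Norms.L2Operator in infer_instance

lemma mpow_eq_cfc {A : Matrix (Fin n) (Fin n) ℂ} (hA : A.IsHermitian) (q : ℝ) :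
    mpow A q = cfc (fun x : ℝ => x ^ q) A := by
  rw [hA.cfc_eq, mpow, dif_pos hA, Matrix.IsHermitian.cfc, Unitary.conjStarAlgAut_apply]
  rfl

lemma mpow_eq_rpow {A : Matrix (Fin n) (Fin n) ℂ} (hA : 0 ≤ A) (q : ℝ) : mpow A q = A ^ q := by
  rw [mpow_eq_cfc hA.posSemidef.isHermitian, CFC.rpow_eq_cfc_real hA]

lemma mpow_smul_one (c q : ℝ) :
    mpow (c • (1 : Matrix (Fin n) (Fin n) ℂ)) q = (c ^ q) • 1 := by
  have hc : (c • (1 : Matrix (Fin n) (Fin n) ℂ)).IsHermitian := isHermitian_one.smul (.all c)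
  rw [mpow_eq_cfc hc, ← Algebra.algebraMap_eq_smul_one, cfc_algebraMap,
    Algebra.algebraMap_eq_smul_one]

lemma concaveOn_mpow (hp : p ∈ Set.Icc 0 1) :
    ConcaveOn ℝ (Set.Ici (0 : Matrix (Fin n) (Fin n) ℂ)) (mpow · p) := by
  have hpow : ConcaveOn ℝ (Set.Ici (0 : Matrix (Fin n) (Fin n) ℂ)) (· ^ p) := by
    open scoped Matrix.Norms.L2Operator in exact CFC.concaveOn_rpow hp
  exact hpow.congr fun A hA => (mpow_eq_rpow hA p).symm

lemma continuousOn_mpow (hp : 0 ≤ p) :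
    ContinuousOn (mpow · p) (Set.Ici (0 : Matrix (Fin n) (Fin n) ℂ)) := by
  have hpow : ContinuousOn (· ^ p) (Set.Ici (0 : Matrix (Fin n) (Fin n) ℂ)) := by
    open scoped Matrix.Norms.L2Operator in exact continuousOn_rpow_Ici hp
  exact hpow.congr fun A hA => mpow_eq_rpow hA p

end MatrixPower

section Gmap

open scoped MatrixOrder

variable {n : ℕ} {p : ℝ}

lemma concaveOn_Gmap (hp : p ∈ Set.Icc 0 1) :
    ConcaveOn ℝ (Set.Ici (0 : Matrix (Fin n) (Fin n) ℂ) ×ˢ Set.Ici 0)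
      (fun X => Gmap p X.1 X.2) := by
  -- `hF` is explicit because the topology of the entrywise sup norm unifies with the one on
  -- matrices only after unfolding more than instance search does.
  have hG := concaveOn_integral_segment (hF := closedIciTopology_matrix) (concaveOn_mpow hp)
    (continuousOn_mpow (n := n) hp.1)
  exact hG.smul (add_nonneg hp.1 zero_le_one)

lemma Gmap_smul_one (s t : ℝ) :
    Gmap p (s • (1 : Matrix (Fin n) (Fin n) ℂ)) (t • 1) =
      ((p + 1) * ∫ l in (0 : ℝ)..1, ((s - t) * l + t) ^ p) • 1 := by
  have hseg (l : ℝ) : mpow (l • s • (1 : Matrix (Fin n) (Fin n) ℂ) + (1 - l) • t • 1) p =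
      (((s - t) * l + t) ^ p) • 1 := by
    rw [← mpow_smul_one]
    congr 1
    module
  rw [intervalIntegral.integral_of_le zero_le_one, ← integral_Icc_eq_integral_Ioc, Gmap,
    funext hseg, integral_smul_const, smul_smul]

lemma Gmap_smul_one_of_ne (hp : -1 < p) {s t : ℝ} (hst : s ≠ t) :
    Gmap p (s • (1 : Matrix (Fin n) (Fin n) ℂ)) (t • 1) =
      ((t ^ (p + 1) - s ^ (p + 1)) / (t - s)) • 1 := by
  rw [Gmap_smul_one, integral_rpow_segment hp hst, ← mul_div_assoc,
    mul_div_mul_left _ _ (by linarith)]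

lemma Gmap_smul_one_self (t : ℝ) :
    Gmap p (t • (1 : Matrix (Fin n) (Fin n) ℂ)) (t • 1) = ((p + 1) * t ^ p) • 1 := by
  simp [Gmap_smul_one]

theorem stmt1_general (n : ℕ) {p : ℝ} (hp : 0 ≤ p) :
    (p ≤ 1 → ConcaveOn ℝ (Set.Ici (0 : Matrix (Fin n) (Fin n) ℂ) ×ˢ Set.Ici 0)
      (fun X => Gmap p X.1 X.2)) ∧
    (∀ s t : ℝ, 0 ≤ s → 0 ≤ t → s ≠ t →
      Gmap p (s • (1 : Matrix (Fin n) (Fin n) ℂ)) (t • 1) =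
        ((t ^ (p + 1) - s ^ (p + 1)) / (t - s)) • 1) ∧
    (∀ t : ℝ, 0 ≤ t →
      Gmap p (t • (1 : Matrix (Fin n) (Fin n) ℂ)) (t • 1) = ((p + 1) * t ^ p) • 1) :=
  ⟨fun hp1 => concaveOn_Gmap ⟨hp, hp1⟩,
    fun _ _ _ _ hst => Gmap_smul_one_of_ne (by linarith) hst,
    fun t _ => Gmap_smul_one_self t⟩

end Gmap

theorem stmt1 (p : ℝ) (hp0 : 0 < p) (hp1 : p ≤ 1) :
    (∀ (n : ℕ) (A₁ A₂ B₁ B₂ : Matrix (Fin n) (Fin n) ℂ),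
      A₁.PosDef → A₂.PosDef → B₁.PosDef → B₂.PosDef →
      ∀ α : ℝ, 0 ≤ α → α ≤ 1 →
      (Gmap p (α • A₁ + (1 - α) • A₂) (α • B₁ + (1 - α) • B₂) -
        (α • Gmap p A₁ B₁ + (1 - α) • Gmap p A₂ B₂)).PosSemidef) ∧
    (∀ s t : ℝ, 0 < s → 0 < t → s ≠ t →
      Gmap p (s • (1 : Matrix (Fin 1) (Fin 1) ℂ)) (t • 1) =
        ((t ^ (p + 1) - s ^ (p + 1)) / (t - s)) • 1) ∧
    (∀ t : ℝ, 0 < t →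
      Gmap p (t • (1 : Matrix (Fin 1) (Fin 1) ℂ)) (t • 1) = ((p + 1) * t ^ p) • 1) := by
  obtain ⟨-, hne, hself⟩ := stmt1_general 1 hp0.le
  refine ⟨fun n A₁ A₂ B₁ B₂ hA₁ hA₂ hB₁ hB₂ α hα₀ hα₁ => ?_,
    fun s t hs ht => hne s t hs.le ht.le, fun t ht => hself t ht.le⟩
  exact ((stmt1_general n hp0.le).1 hp1).2 (x := (A₁, B₁)) (y := (A₂, B₂))
    ⟨hA₁.posSemidef.nonneg, hB₁.posSemidef.nonneg⟩
    ⟨hA₂.posSemidef.nonneg, hB₂.posSemidef.nonneg⟩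
    hα₀ (sub_nonneg.2 hα₁) (add_sub_cancel α 1)
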